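/- Let A ∈ ℝ^{n×n} be symmetric, let v₁ be a unit eigenvector of A whose eigenvalue λ₁ satisfies |λ₁| = ‖A‖_{2→2}, and let v be a unit eigenvector of A orthogonal to v₁. Let q₀ be a unit vector, let q_j be the power iterates of A started at q₀ (assume Aq_i ≠ 0 for 0 ≤ i < j), and let ε > 0. If (vᵀq_j)² > 1 − ε, then (v₁ᵀq₀)² < ε. -/

import Mathlib

open scoped BigOperators
open Matrix

namespace Stmt6

/-- Euclidean norm of a vector in `ℝⁿ`. -/
noncomputable def enorm {n : ℕ} (v : Fin n → ℝ) : ℝ := Real.sqrt (∑ i, v i ^ 2)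

/-- Euclidean inner product of vectors in `ℝⁿ`. -/
def dot {n : ℕ} (v w : Fin n → ℝ) : ℝ := ∑ i, v i * w i

end Stmt6

open Stmt6

/-!
An eigenvector `u` whose eigenvalue `μ` attains the operator norm of `T` is also an eigenvector of
the adjoint, because `‖T† u‖ ≤ ‖T‖ ‖u‖ = ‖conj μ • u‖` and
`re ⟪T† u, conj μ • u⟫ = ‖conj μ • u‖ ^ 2` leave no room for a difference. Hence one step of the
power iteration multiplies the component along `u` by `μ`, where `|μ| = ‖T‖`, and then divides it
by `‖T (q i)‖ ≤ ‖T‖`, so its absolute value never decreases. If `q j` is almost parallel to some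
`v` orthogonal to `u`, then Bessel's inequality forces the component of `q j` along `u`, and a
fortiori that of `q 0`, to be small.
-/

section Hilbert

open ContinuousLinearMap
open scoped InnerProductSpace

variable {𝕜 E : Type*} [RCLike 𝕜] [NormedAddCommGroup E] [InnerProductSpace 𝕜 E]

theorem norm_inner_sq_add_norm_inner_sq_le {u v : E} (hu : ‖u‖ = 1) (hv : ‖v‖ = 1)
    (huv : ⟪u, v⟫_𝕜 = 0) (x : E) : ‖⟪u, x⟫_𝕜‖ ^ 2 + ‖⟪v, x⟫_𝕜‖ ^ 2 ≤ ‖x‖ ^ 2 := by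
  have huv_orthonormal : Orthonormal 𝕜 ![u, v] := by simp [orthonormal_vecCons_iff, hu, hv, huv]
  simpa using huv_orthonormal.sum_inner_products_le x (s := Finset.univ)

/-- The first `j` steps of the power iteration of `T` started at `q 0` are defined, that is,
`T (q i) ≠ 0` for `i < j`, and yield `q 1, …, q j`. The values `q i` for `i > j` are arbitrary. -/
def IsPowerIteration (T : E →L[𝕜] E) (q : ℕ → E) (j : ℕ) : Prop :=
  ∀ i < j, T (q i) ≠ 0 ∧ q (i + 1) = (‖T (q i)‖ : 𝕜)⁻¹ • T (q i)

theorem IsPowerIteration.norm_eq_one {T : E →L[𝕜] E} {q : ℕ → E} {j : ℕ}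
    (hq : IsPowerIteration T q j) (hq0 : ‖q 0‖ = 1) {i : ℕ} (hi : i ≤ j) : ‖q i‖ = 1 := by
  cases i with
  | zero => exact hq0
  | succ i =>
    obtain ⟨hne, hrec⟩ := hq i hi
    rw [hrec, norm_smul_inv_norm hne]

section LeadingEigenvector

variable [CompleteSpace E] {T : E →L[𝕜] E} {μ : 𝕜} {u : E}

theorem adjoint_apply_eq_conj_smul_of_norm_eq (hu : T u = μ • u) (hμ : ‖μ‖ = ‖T‖) :
    adjoint T u = starRingEnd 𝕜 μ • u := by
  refine eq_of_norm_le_re_inner_eq_norm_sq (𝕜 := 𝕜) ?_ ?_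
  · calc ‖adjoint T u‖ ≤ ‖adjoint T‖ * ‖u‖ := le_opNorm _ _
      _ = ‖starRingEnd 𝕜 μ • u‖ := by
        rw [LinearIsometryEquiv.norm_map, norm_smul, RCLike.norm_conj, hμ]
  · have hinner : ⟪adjoint T u, starRingEnd 𝕜 μ • u⟫_𝕜 =
        ⟪starRingEnd 𝕜 μ • u, starRingEnd 𝕜 μ • u⟫_𝕜 := by
      rw [adjoint_inner_left, map_smul, hu, inner_smul_right, inner_smul_right, inner_smul_left,
        inner_smul_right, RCLike.conj_conj]
      ring
    rw [hinner, inner_self_eq_norm_sq]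

theorem inner_apply_eq_mul_inner_of_norm_eq (hu : T u = μ • u) (hμ : ‖μ‖ = ‖T‖) (x : E) :
    ⟪u, T x⟫_𝕜 = μ * ⟪u, x⟫_𝕜 := by
  rw [← adjoint_inner_left, adjoint_apply_eq_conj_smul_of_norm_eq hu hμ, inner_smul_left,
    RCLike.conj_conj]

theorem norm_inner_mul_norm_apply_le (hu : T u = μ • u) (hμ : ‖μ‖ = ‖T‖) (x : E) :
    ‖⟪u, x⟫_𝕜‖ * ‖T x‖ ≤ ‖⟪u, T x⟫_𝕜‖ * ‖x‖ := by
  calc ‖⟪u, x⟫_𝕜‖ * ‖T x‖ ≤ ‖⟪u, x⟫_𝕜‖ * (‖T‖ * ‖x‖) := by gcongr; exact T.le_opNorm x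
    _ = ‖⟪u, T x⟫_𝕜‖ * ‖x‖ := by
      rw [inner_apply_eq_mul_inner_of_norm_eq hu hμ, norm_mul, hμ]
      ring

theorem IsPowerIteration.norm_inner_zero_le {q : ℕ → E} {j : ℕ} (hq : IsPowerIteration T q j)
    (hq0 : ‖q 0‖ = 1) (hu : T u = μ • u) (hμ : ‖μ‖ = ‖T‖) {i : ℕ} (hi : i ≤ j) :
    ‖⟪u, q 0⟫_𝕜‖ ≤ ‖⟪u, q i⟫_𝕜‖ := by
  induction i with
  | zero => rfl
  | succ i ih =>
    have hqi : ‖q i‖ = 1 := hq.norm_eq_one hq0 (Nat.le_of_succ_le hi)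
    obtain ⟨hne, hrec⟩ := hq i hi
    calc ‖⟪u, q 0⟫_𝕜‖ ≤ ‖⟪u, q i⟫_𝕜‖ := ih (Nat.le_of_succ_le hi)
      _ ≤ ‖⟪u, T (q i)⟫_𝕜‖ / ‖T (q i)‖ := by
        rw [le_div_iff₀ (norm_pos_iff.mpr hne)]
        simpa only [hqi, mul_one] using norm_inner_mul_norm_apply_le hu hμ (q i)
      _ = ‖⟪u, q (i + 1)⟫_𝕜‖ := by
        rw [hrec, inner_smul_right, norm_mul, norm_inv, RCLike.norm_ofReal, abs_norm,
          inv_mul_eq_div]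

theorem power_iteration_false_positive_general (hunit : ‖u‖ = 1) (hu : T u = μ • u)
    (hμ : ‖μ‖ = ‖T‖) {v : E} (hvunit : ‖v‖ = 1) (horth : ⟪u, v⟫_𝕜 = 0) {q : ℕ → E}
    (hq0 : ‖q 0‖ = 1) {j : ℕ} (hq : IsPowerIteration T q j) {ε : ℝ}
    (hconv : 1 - ε < ‖⟪v, q j⟫_𝕜‖ ^ 2) : ‖⟪u, q 0⟫_𝕜‖ ^ 2 < ε := by
  have hbessel : ‖⟪u, q j⟫_𝕜‖ ^ 2 + ‖⟪v, q j⟫_𝕜‖ ^ 2 ≤ 1 := by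
    simpa only [hq.norm_eq_one hq0 le_rfl, one_pow] using
      norm_inner_sq_add_norm_inner_sq_le hunit hvunit horth (q j)
  calc ‖⟪u, q 0⟫_𝕜‖ ^ 2 ≤ ‖⟪u, q j⟫_𝕜‖ ^ 2 := by
        gcongr
        exact hq.norm_inner_zero_le hq0 hu hμ le_rfl
    _ < ε := by linarith

end LeadingEigenvector

end Hilbert

section Coordinates

variable {n : ℕ}

theorem enorm_eq_norm_toLp (v : Fin n → ℝ) : Stmt6.enorm v = ‖WithLp.toLp 2 v‖ := by
  simp only [Stmt6.enorm, EuclideanSpace.norm_eq, Real.norm_eq_abs, sq_abs]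

theorem dot_eq_inner_toLp (v w : Fin n → ℝ) :
    dot v w = inner ℝ (WithLp.toLp 2 v) (WithLp.toLp 2 w) := by
  simp only [dot, PiLp.inner_apply, Real.inner_apply]

theorem dot_sq_eq_norm_inner_toLp_sq (v w : Fin n → ℝ) :
    dot v w ^ 2 = ‖inner ℝ (WithLp.toLp 2 v) (WithLp.toLp 2 w)‖ ^ 2 := by
  rw [dot_eq_inner_toLp, Real.norm_eq_abs, sq_abs]

theorem isPowerIteration_toEuclideanCLM {A : Matrix (Fin n) (Fin n) ℝ} {q : ℕ → Fin n → ℝ}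
    {j : ℕ} (hne : ∀ i < j, A *ᵥ q i ≠ 0)
    (hrec : ∀ i < j, q (i + 1) = (Stmt6.enorm (A *ᵥ q i))⁻¹ • (A *ᵥ q i)) :
    IsPowerIteration (Matrix.toEuclideanCLM (𝕜 := ℝ) A) (fun i => WithLp.toLp 2 (q i)) j := by
  intro i hi
  simp only [toEuclideanCLM_toLp]
  refine ⟨(WithLp.toLp_eq_zero 2).not.mpr (hne i hi), ?_⟩
  rw [hrec i hi, enorm_eq_norm_toLp, WithLp.toLp_smul, RCLike.ofReal_real_eq_id, id]

end Coordinates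

/-- If `v` is a unit eigenvector of the symmetric matrix `A` orthogonal
to a leading unit eigenvector `v₁` (whose eigenvalue `λ₁` satisfies `|λ₁| = ‖A‖₂→₂`),
and the `j`-th power iterate satisfies `(vᵀq_j)² > 1 − ε`, then the initialization was
poor: `(v₁ᵀq₀)² < ε`. -/
theorem power_iteration_false_positive
    (n : ℕ) (A : Matrix (Fin n) (Fin n) ℝ) (hA : A.IsSymm)
    (lam1 : ℝ) (v1 : Fin n → ℝ) (hv1unit : Stmt6.enorm v1 = 1)
    (hv1eig : A *ᵥ v1 = lam1 • v1)
    (hlead : |lam1| = ‖Matrix.toEuclideanCLM (𝕜 := ℝ) A‖)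
    (lam : ℝ) (v : Fin n → ℝ) (hvunit : Stmt6.enorm v = 1)
    (hveig : A *ᵥ v = lam • v) (horth : dot v v1 = 0)
    (q : ℕ → Fin n → ℝ) (hq0unit : Stmt6.enorm (q 0) = 1)
    (j : ℕ)
    (hne : ∀ i < j, A *ᵥ q i ≠ 0)
    (hrec : ∀ i < j, q (i + 1) = (Stmt6.enorm (A *ᵥ q i))⁻¹ • (A *ᵥ q i))
    (ε : ℝ) (hε : 0 < ε)
    (hconv : 1 - ε < dot v (q j) ^ 2) :
    dot v1 (q 0) ^ 2 < ε := by
  rw [enorm_eq_norm_toLp] at hv1unit hvunit hq0unit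
  rw [dot_eq_inner_toLp, inner_eq_zero_symm] at horth
  rw [dot_sq_eq_norm_inner_toLp_sq] at hconv ⊢
  have hT : Matrix.toEuclideanCLM (𝕜 := ℝ) A (WithLp.toLp 2 v1) = lam1 • WithLp.toLp 2 v1 := by
    rw [Matrix.toEuclideanCLM_toLp, hv1eig, WithLp.toLp_smul]
  exact power_iteration_false_positive_general hv1unit hT hlead hvunit horth
    (q := fun i => WithLp.toLp 2 (q i)) hq0unit (isPowerIteration_toEuclideanCLM hne hrec) hconv
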